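/- Let T_n be uniformly distributed over the set 𝒯_n of plane trees with n edges, where each tree carries a distinguished oriented edge, initially the edge going from the first child of the root ρ towards ρ. Conditionally on T_n, let X_1 be a uniformly chosen neighbour of ρ, and let T_n^{(1)} be the plane tree obtained from T_n by keeping the planar ordering but changing the distinguished oriented edge to (ρ, X_1). Then T_n^{(1)} is uniformly distributed over 𝒯_n. -/

import Mathlib

/-!
Re-rooting at the `i`-th child of the root factors as two bijections that preserve the number of
edges: rotate the children of the root cyclically so that the `i`-th one comes first, then exchange
the two ends of the edge leading to the first child. Rotation does not change the root degree `d`,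
so a tree has exactly one preimage under rotation by each index `i < d`, and all of these have root
degree `d`; summing `d` terms `p / d` shows that the uniform law is preserved.
-/

open MeasureTheory ProbabilityTheory
open scoped ENNReal

/-- A plane tree: a rooted tree in which the children of each vertex are linearly
ordered (given by the list of the subtrees of the root). -/
inductive PlaneTree : Type where
  | node : List PlaneTree → PlaneTree

namespace PlaneTree

/-- We endow the countable type of plane trees with the discrete σ-algebra. -/
instance : MeasurableSpace PlaneTree := ⊤

/-- Membership of an Ulam–Harris label (list of successive child indices) in a plane
tree. -/
def mem : PlaneTree → List ℕ → Bool
  | _, [] => true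
  | node [], _ :: _ => false
  | node (t :: _), 0 :: u => t.mem u
  | node (_ :: ts), (i + 1) :: u => (node ts).mem (i :: u)

/-- The number of vertices of a plane tree. -/
noncomputable def vertexCount (t : PlaneTree) : ℕ :=
  Nat.card {u : List ℕ | t.mem u = true}

/-- The number of edges of a plane tree. -/
noncomputable def edgeCount (t : PlaneTree) : ℕ :=
  t.vertexCount - 1

/-- The degree of the root of a plane tree, i.e. its number of children (the root has no
parent, so its neighbours are exactly its children). -/
def rootDeg : PlaneTree → ℕ
  | node ts => ts.length

/-- Re-rooting a plane tree at the `i`-th child `X₁` of its root `ρ` (for `i < rootDeg`),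
i.e. changing the distinguished oriented edge to `(ρ, X₁)`: the new root is `X₁`, its
first child is `ρ`, and the planar (cyclic) ordering around every vertex is preserved:
the children of `ρ` become, in order, those after `X₁` followed by those before `X₁`. -/
def reroot : PlaneTree → ℕ → PlaneTree
  | node ts, i =>
    match ts[i]? with
    | some (node cs) => node (node (ts.drop (i + 1) ++ ts.take i) :: cs)
    | none => node ts

end PlaneTree

namespace PlaneTree

/-- The vertices of `node (t :: ts)` split into those of the first branch `t` and those of
`node ts`, the tree with that branch removed. This is the recursion behind all vertex counts. -/
def verticesConsEquiv (t : PlaneTree) (ts : List PlaneTree) :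
    {u : List ℕ | t.mem u = true} ⊕ {u : List ℕ | (node ts).mem u = true} ≃
      {u : List ℕ | (node (t :: ts)).mem u = true} where
  toFun
    | .inl ⟨u, hu⟩ => ⟨0 :: u, by simpa [mem] using hu⟩
    | .inr ⟨[], _⟩ => ⟨[], by simp [mem]⟩
    | .inr ⟨i :: u, hu⟩ => ⟨(i + 1) :: u, by simpa [mem] using hu⟩
  invFun
    | ⟨[], _⟩ => .inr ⟨[], by simp [mem]⟩
    | ⟨0 :: u, hu⟩ => .inl ⟨u, by simpa [mem] using hu⟩
    | ⟨(i + 1) :: u, hu⟩ => .inr ⟨i :: u, by simpa [mem] using hu⟩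
  left_inv := by rintro (⟨u, hu⟩ | ⟨_ | ⟨i, u⟩, hu⟩) <;> rfl
  right_inv := by rintro ⟨_ | ⟨_ | i, u⟩, hu⟩ <;> rfl

theorem vertices_node_nil : {u : List ℕ | (node []).mem u = true} = {[]} := by
  ext u
  cases u <;> simp [mem]

instance finite_vertices : ∀ t : PlaneTree, Finite {u : List ℕ | t.mem u = true}
  | node [] => by rw [vertices_node_nil]; infer_instance
  | node (t :: ts) =>
    have := finite_vertices t
    have := finite_vertices (node ts)
    Finite.of_equiv _ (verticesConsEquiv t ts)

theorem vertexCount_node_cons (t : PlaneTree) (ts : List PlaneTree) :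
    (node (t :: ts)).vertexCount = t.vertexCount + (node ts).vertexCount := by
  simp only [vertexCount, ← Nat.card_congr (verticesConsEquiv t ts), Nat.card_sum]

theorem vertexCount_node (ts : List PlaneTree) :
    (node ts).vertexCount = (ts.map vertexCount).sum + 1 := by
  induction ts with
  | nil => simp [vertexCount, vertices_node_nil]
  | cons t ts ih => rw [vertexCount_node_cons, ih, List.map_cons, List.sum_cons, add_assoc]

theorem rootDeg_ne_zero_of_edgeCount_ne_zero {t : PlaneTree} (h : t.edgeCount ≠ 0) :
    t.rootDeg ≠ 0 := by
  obtain ⟨_ | ⟨t, ts⟩⟩ := t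
  · simp [edgeCount, vertexCount_node] at h
  · simp [rootDeg]

/-- The plane tree `t` with the children of its root rotated cyclically `k` times to the left, so
that for `k < t.rootDeg` the `k`-th child becomes the first one. -/
def rotate : PlaneTree → ℕ → PlaneTree
  | node ts, k => node (ts.rotate k)

theorem rootDeg_rotate (t : PlaneTree) (k : ℕ) : (t.rotate k).rootDeg = t.rootDeg := by
  cases t
  simp [rotate, rootDeg]

theorem edgeCount_rotate (t : PlaneTree) (k : ℕ) : (t.rotate k).edgeCount = t.edgeCount := by
  obtain ⟨ts⟩ := t
  simp only [rotate, edgeCount, vertexCount_node,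
    ((List.rotate_perm ts k).map vertexCount).sum_eq]

theorem rotate_eq_iff {t σ : PlaneTree} {i : ℕ} (hi : i < t.rootDeg) :
    t.rotate i = σ ↔ i < σ.rootDeg ∧ t = σ.rotate (σ.rootDeg - i) := by
  have hdeg : t.rotate i = σ → i < σ.rootDeg := fun h ↦ by rwa [← h, rootDeg_rotate]
  rw [← and_iff_right_of_imp hdeg]
  refine and_congr_right fun hi' ↦ ?_
  obtain ⟨ts⟩ := t
  obtain ⟨ss⟩ := σ
  simp only [rotate, rootDeg, node.injEq] at hi' ⊢
  rw [List.rotate_eq_iff, Nat.mod_eq_of_lt hi']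

/-- The plane tree obtained by exchanging the roles of the two ends of the edge from the root to
its first child; the one-vertex tree, which has no such edge, is left unchanged. In terms of
distinguished oriented edges, this reverses the distinguished edge. -/
def flipRootEdge : PlaneTree → PlaneTree
  | node [] => node []
  | node (node cs :: ds) => node (node ds :: cs)

theorem flipRootEdge_involutive : Function.Involutive flipRootEdge
  | node [] => rfl
  | node (node _ :: _) => rfl

theorem edgeCount_flipRootEdge : ∀ t : PlaneTree, t.flipRootEdge.edgeCount = t.edgeCount
  | node [] => rfl
  | node (node cs :: ds) => by
    simp only [flipRootEdge, edgeCount, vertexCount_node, List.map_cons, List.sum_cons]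
    omega

theorem reroot_of_rootDeg_le {t : PlaneTree} {i : ℕ} (hi : t.rootDeg ≤ i) : t.reroot i = t := by
  obtain ⟨ts⟩ := t
  simp only [reroot, List.getElem?_eq_none (show ts.length ≤ i from hi)]

theorem reroot_of_lt_rootDeg {t : PlaneTree} {i : ℕ} (hi : i < t.rootDeg) :
    t.reroot i = (t.rotate i).flipRootEdge := by
  obtain ⟨ts⟩ := t
  change i < ts.length at hi
  have hrot : ts.rotate i = ts[i] :: (ts.drop (i + 1) ++ ts.take i) := by
    rw [List.rotate_eq_drop_append_take hi.le, List.drop_eq_getElem_cons hi, List.cons_append]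
  simp only [reroot, rotate, hrot, List.getElem?_eq_getElem hi]
  cases ts[i]
  rfl

theorem reroot_eq_flipRootEdge_iff {t σ : PlaneTree} {i : ℕ} :
    t.reroot i = σ.flipRootEdge ↔
      (i < σ.rootDeg ∧ t = σ.rotate (σ.rootDeg - i)) ∨
        (σ.flipRootEdge.rootDeg ≤ i ∧ t = σ.flipRootEdge) := by
  obtain hi | hi := lt_or_ge i t.rootDeg
  · have hright : ¬(σ.flipRootEdge.rootDeg ≤ i ∧ t = σ.flipRootEdge) := by
      rintro ⟨hle, rfl⟩
      exact hi.not_ge hle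
    rw [reroot_of_lt_rootDeg hi, flipRootEdge_involutive.injective.eq_iff, rotate_eq_iff hi,
      or_iff_left hright]
  · have hleft : ¬(i < σ.rootDeg ∧ t = σ.rotate (σ.rootDeg - i)) := by
      rintro ⟨hlt, rfl⟩
      exact hlt.not_ge (rootDeg_rotate σ _ ▸ hi)
    rw [reroot_of_rootDeg_le hi, or_iff_right hleft]
    exact ⟨fun h ↦ ⟨h ▸ hi, h⟩, And.right⟩

end PlaneTree

theorem measure_mem_and_eq_apply_eq_sum {Ω α ι : Type*} [MeasurableSpace Ω] [MeasurableSpace α]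
    [MeasurableSingletonClass α] [MeasurableSpace ι] [MeasurableSingletonClass ι]
    (P : Measure Ω) {T : Ω → α} {X : Ω → ι} (hT : Measurable T) (hX : Measurable X)
    (g : ι → α) (s : Finset ι) :
    P {ω | X ω ∈ s ∧ T ω = g (X ω)} = ∑ i ∈ s, P {ω | T ω = g i ∧ X ω = i} := by
  have hunion : {ω | X ω ∈ s ∧ T ω = g (X ω)} = ⋃ i ∈ s, {ω | T ω = g i ∧ X ω = i} := by
    ext ω
    simp [and_comm]
  rw [hunion, measure_biUnion_finset]
  · exact fun i _ j _ hij ↦ Set.disjoint_left.mpr fun ω hi hj ↦ hij (hi.2.symm.trans hj.2)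
  · exact fun i _ ↦ (hT (measurableSet_singleton _)).inter (hX (measurableSet_singleton i))

namespace PlaneTree

variable {Ω : Type*} [MeasurableSpace Ω] {P : Measure Ω} {T : Ω → PlaneTree} {X : Ω → ℕ}

instance : MeasurableSingletonClass PlaneTree := ⟨fun _ ↦ MeasurableSpace.measurableSet_top⟩

theorem setOf_reroot_eq_flipRootEdge_ae_eq {σ : PlaneTree}
    (hX : ∀ i, σ.flipRootEdge.rootDeg ≤ i → P {ω | T ω = σ.flipRootEdge ∧ X ω = i} = 0) :
    {ω | (T ω).reroot (X ω) = σ.flipRootEdge} =ᵐ[P]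
      {ω | X ω < σ.rootDeg ∧ T ω = σ.rotate (σ.rootDeg - X ω)} := by
  have hnull : P {ω | σ.flipRootEdge.rootDeg ≤ X ω ∧ T ω = σ.flipRootEdge} = 0 := by
    refine measure_mono_null (fun ω hω ↦ ?_)
      (measure_iUnion_null fun i ↦ measure_iUnion_null (hX i))
    exact Set.mem_iUnion₂.mpr ⟨X ω, hω.1, hω.2, rfl⟩
  simp only [reroot_eq_flipRootEdge_iff, Set.ofPred_or]
  exact union_ae_eq_left_of_ae_eq_empty (ae_eq_empty.mpr hnull)

theorem measure_reroot_eq_flipRootEdge (hT : Measurable T) (hX : Measurable X)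
    (hcond : ∀ τ : PlaneTree, ∀ i : ℕ,
      (i < τ.rootDeg →
        P {ω | T ω = τ ∧ X ω = i} = P {ω | T ω = τ} / (τ.rootDeg : ℝ≥0∞)) ∧
      (τ.rootDeg ≤ i → P {ω | T ω = τ ∧ X ω = i} = 0))
    {σ : PlaneTree} (hσ : σ.rootDeg ≠ 0)
    (hrotate : ∀ k, P {ω | T ω = σ.rotate k} = P {ω | T ω = σ}) :
    P {ω | (T ω).reroot (X ω) = σ.flipRootEdge} = P {ω | T ω = σ} := by
  have hfibre : ∀ i ∈ Finset.range σ.rootDeg,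
      P {ω | T ω = σ.rotate (σ.rootDeg - i) ∧ X ω = i} = P {ω | T ω = σ} / σ.rootDeg := by
    intro i hi
    rw [(hcond _ i).1 (by rwa [rootDeg_rotate, ← Finset.mem_range]), rootDeg_rotate, hrotate]
  calc P {ω | (T ω).reroot (X ω) = σ.flipRootEdge}
      = P {ω | X ω < σ.rootDeg ∧ T ω = σ.rotate (σ.rootDeg - X ω)} :=
        measure_congr (setOf_reroot_eq_flipRootEdge_ae_eq fun i ↦ (hcond _ i).2)
    _ = ∑ i ∈ Finset.range σ.rootDeg, P {ω | T ω = σ.rotate (σ.rootDeg - i) ∧ X ω = i} := by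
        simp only [← measure_mem_and_eq_apply_eq_sum P hT hX (fun i ↦ σ.rotate (σ.rootDeg - i)),
          Finset.mem_range]
    _ = σ.rootDeg * (P {ω | T ω = σ} / σ.rootDeg) := by
        rw [Finset.sum_congr rfl hfibre, Finset.sum_const, Finset.card_range, nsmul_eq_mul]
    _ = P {ω | T ω = σ} :=
        ENNReal.mul_div_cancel (Nat.cast_ne_zero.mpr hσ) (ENNReal.natCast_ne_top _)

end PlaneTree

theorem rerooted_uniform_tree_is_uniform_general
    {Ω : Type*} [MeasurableSpace Ω] (P : Measure Ω)
    (n : ℕ) (hn : 1 ≤ n) (T : Ω → PlaneTree) (X : Ω → ℕ)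
    (hTm : Measurable T) (hXm : Measurable X)
    (hunif : ∀ τ τ' : PlaneTree, τ.edgeCount = n → τ'.edgeCount = n →
      P {ω | T ω = τ} = P {ω | T ω = τ'})
    (hcond : ∀ τ : PlaneTree, ∀ i : ℕ,
      (i < τ.rootDeg →
        P {ω | T ω = τ ∧ X ω = i} = P {ω | T ω = τ} / (τ.rootDeg : ℝ≥0∞)) ∧
      (τ.rootDeg ≤ i → P {ω | T ω = τ ∧ X ω = i} = 0))
    (τ : PlaneTree) (hτ : τ.edgeCount = n) :
    P {ω | (T ω).reroot (X ω) = τ} = P {ω | T ω = τ} := by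
  have hflip : τ.flipRootEdge.edgeCount = n := τ.edgeCount_flipRootEdge.trans hτ
  have hdeg : τ.flipRootEdge.rootDeg ≠ 0 :=
    PlaneTree.rootDeg_ne_zero_of_edgeCount_ne_zero (by omega)
  have hrotate (k : ℕ) : P {ω | T ω = τ.flipRootEdge.rotate k} = P {ω | T ω = τ.flipRootEdge} :=
    hunif _ _ ((PlaneTree.edgeCount_rotate _ k).trans hflip) hflip
  have hreroot := PlaneTree.measure_reroot_eq_flipRootEdge hTm hXm hcond hdeg hrotate
  rw [PlaneTree.flipRootEdge_involutive τ] at hreroot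
  exact hreroot.trans (hunif _ _ hflip hτ)

/-- Let `T_n` be uniformly distributed over the set `𝒯_n` of plane trees with `n` edges
(each tree carrying the distinguished oriented edge going from the first child of the
root towards the root), and conditionally on `T_n` let `X₁` be a uniformly chosen
neighbour of the root, encoded by the uniform child index `X`.  Then the tree
`T_n^{(1)}`, obtained by keeping the planar ordering and changing the distinguished
oriented edge to `(ρ, X₁)` (i.e. re-rooting at `X₁`), is uniformly distributed
over `𝒯_n`. -/
theorem rerooted_uniform_tree_is_uniform
    {Ω : Type*} [MeasurableSpace Ω] (P : Measure Ω) [IsProbabilityMeasure P]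
    (n : ℕ) (hn : 1 ≤ n) (Tn : Ω → PlaneTree) (X : Ω → ℕ)
    (hTm : Measurable Tn) (hXm : Measurable X)
    (hsupp : P {ω | (Tn ω).edgeCount = n} = 1)
    (hunif : ∀ τ τ' : PlaneTree, τ.edgeCount = n → τ'.edgeCount = n →
      P {ω | Tn ω = τ} = P {ω | Tn ω = τ'})
    (hcond : ∀ τ : PlaneTree, ∀ i : ℕ,
      (i < τ.rootDeg →
        P {ω | Tn ω = τ ∧ X ω = i} = P {ω | Tn ω = τ} / (τ.rootDeg : ℝ≥0∞)) ∧
      (τ.rootDeg ≤ i → P {ω | Tn ω = τ ∧ X ω = i} = 0)) :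
    ∀ τ τ' : PlaneTree, τ.edgeCount = n → τ'.edgeCount = n →
      P {ω | (Tn ω).reroot (X ω) = τ} = P {ω | (Tn ω).reroot (X ω) = τ'} := by
  have hlaw := rerooted_uniform_tree_is_uniform_general P n hn Tn X hTm hXm hunif hcond
  exact fun τ τ' hτ hτ' ↦ by rw [hlaw τ hτ, hlaw τ' hτ', hunif τ τ' hτ hτ']
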